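/- Let λ : G → A be a group homomorphism and write m_i′ := m_i − m_{i+1}. (1) If f : M³ → A is a G-invariant A-multilinear map, then ((f ⊗ id_A) ∘ ψ_{2,λ} ∘ γ₂)((m₀,g₀),(m₁,g₁),(m₂,g₂)) = f(m₀′ − m₀′·(φ(g₁)⁻¹g₁), m₁′, m₂ − m₂·(φ(g₂)g₂⁻¹)) ⊗ λ(g₀) for all m₀,m₁,m₂ ∈ M and g₀,g₁,g₂ ∈ G. (2) If f : M⁴ → A is a G-invariant A-multilinear map, then ((f ⊗ id_A) ∘ ψ_{3,λ} ∘ γ₃)((m₀,g₀),(m₁,g₁),(m₂,g₂),(m₃,g₃)) = [f(m₀′ − m₀′·(φ(g₁)⁻¹g₁), m₁′, m₂′, m₃ − m₃·(φ(g₃)g₃⁻¹)) − f((m₀′ − m₀′·(φ(g₁)⁻¹g₁))g₂, m₁′g₂, m₂′φ(g₂), (m₃ − m₃·(φ(g₃)g₃⁻¹))φ(g₂))] ⊗ λ(g₀) for all m₀,…,m₃ ∈ M and g₀,…,g₃ ∈ G. (These are the values of the 2- and 3-cocycles Φ_{f,λ} of the G-Alexander multiple conjugation biquandle with X-set X on the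 generators all of whose blocks are singletons.) -/

import Mathlib

open FreeAbelianGroup
open scoped TensorProduct

namespace GAlex

variable {G M A : Type*} [Group G] [AddCommGroup M] [DistribMulAction Gᵐᵒᵖ M] [AddCommGroup A]

/-- The right action `m · g` of a group element `g : G` on `m : M`
(coming from the right `ℤ[G]`-module structure on `M`). -/
def ract (m : M) (g : G) : M := MulOpposite.op g • m

variable (φ : G →* G)

/-- The operation `(m,g) ⊳ (n,h) = (mh + n(φ(h) − h), h⁻¹gh)` of the `G`-Alexander biquandle. -/
def under (x y : M × G) : M × G :=
  (ract x.1 y.2 + ract y.1 (φ y.2) - ract y.1 y.2, y.2⁻¹ * x.2 * y.2)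

/-- The operation `(m,g) ⊚ (n,h) = (mφ(h), g)` of the `G`-Alexander biquandle. -/
def overOp (x y : M × G) : M × G := (ract x.1 (φ y.2), x.2)

/-- The face `g_{⟨p⟩}` (delete the `p`-th entry). -/
def dGdel (n : ℕ) (p : Fin (n + 1)) (g : Fin (n + 1) → G) : Fin n → G :=
  fun j => g (p.succAbove j)

/-- The face `g_{⟨⊲p⟩}` (conjugate the first entries by `g p` and delete the `p`-th entry). -/
def dGconj (n : ℕ) (p : Fin (n + 1)) (g : Fin (n + 1) → G) : Fin n → G :=
  fun j => if (j : ℕ) < (p : ℕ) then (g p)⁻¹ * g j.castSucc * g p else g j.succ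

/-- The face `m_{⟨p⟩}` (merge the two entries adjacent to position `p`;
for `p = 0` drop the first entry). -/
def dMmer (n : ℕ) (p : Fin (n + 1)) (m : Fin (n + 1) → M) : Fin n → M :=
  fun j =>
    if (j : ℕ) + 1 < (p : ℕ) then m j.castSucc
    else if (j : ℕ) + 1 = (p : ℕ) then m j.castSucc + m j.succ
    else m j.succ

/-- The face `m_{⟨⊲p⟩}`. -/
def dMconj (n : ℕ) (p : Fin (n + 1)) (g : Fin (n + 1) → G) (m : Fin (n + 1) → M) : Fin n → M :=
  fun j =>
    if (j : ℕ) + 1 < (p : ℕ) then ract (m j.castSucc) (g p)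
    else if (j : ℕ) + 1 = (p : ℕ) then ract (m j.castSucc) (g p) + ract (m j.succ) (φ (g p))
    else ract (m j.succ) (φ (g p))

/-- The boundary map `∂^{BR_U}_{n+1} : C^{BR_U}_{n+1}(X;ℤ) → C^{BR_U}_n(X;ℤ)`
(the boundary `∂^{BR_U}_k` is `0` for `k ≤ 1`, which agrees with this formula at `n = 0`). -/
def dBRU (n : ℕ) :
    FreeAbelianGroup ((Fin (n + 1) → G) × (Fin (n + 1) → M)) →+
      FreeAbelianGroup ((Fin n → G) × (Fin n → M)) :=
  FreeAbelianGroup.lift fun x =>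
    ∑ p : Fin (n + 1),
      (-1 : ℤ) ^ (p : ℕ) •
        (FreeAbelianGroup.of (dGdel n p x.1, dMmer n p x.2) -
          FreeAbelianGroup.of (dGconj n p x.1, dMconj φ n p x.1 x.2))

/-- The birack boundary map `∂^{BR}_{n+1} : C^{BR}_{n+1}(X;ℤ) → C^{BR}_n(X;ℤ)`
for the `G`-Alexander biquandle `X = M × G` (with trivial `X`-set). -/
def dBR (n : ℕ) :
    FreeAbelianGroup (Fin (n + 1) → M × G) →+ FreeAbelianGroup (Fin n → M × G) :=
  FreeAbelianGroup.lift fun x =>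
    ∑ p : Fin (n + 1),
      (-1 : ℤ) ^ (p : ℕ) •
        (FreeAbelianGroup.of (fun j => x (p.succAbove j)) -
          FreeAbelianGroup.of (fun j : Fin n =>
            if (j : ℕ) < (p : ℕ) then under φ (x j.castSucc) (x p)
            else overOp φ (x j.succ) (x p)))

/-- `γ_n((m₁,g₁),…,(m_n,g_n)) = (g₁,…,g_n; m₁−m₂, …, m_{n−1}−m_n, m_n)`. -/
def gammaMap (n : ℕ) :
    FreeAbelianGroup (Fin n → M × G) →+ FreeAbelianGroup ((Fin n → G) × (Fin n → M)) :=
  FreeAbelianGroup.lift fun x =>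
    FreeAbelianGroup.of
      (fun j => (x j).2,
       fun j => (x j).1 - if h : (j : ℕ) + 1 < n then (x ⟨(j : ℕ) + 1, h⟩).1 else 0)

/-- `r_n(g₁,…,g_n; m₁,…,m_n) = ((m₁+⋯+m_n, g₁), (m₂+⋯+m_n, g₂), …, (m_n, g_n))`. -/
def rMap (n : ℕ) :
    FreeAbelianGroup ((Fin n → G) × (Fin n → M)) →+ FreeAbelianGroup (Fin n → M × G) :=
  FreeAbelianGroup.lift fun p =>
    FreeAbelianGroup.of fun j => ((∑ i ∈ Finset.Ici j, p.2 i), p.1 j)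

/-- The boundary map `∂^{BR_U}_{d+1}` of `C^{BR_U}_*(X;ℤ)_X` (the version with `X`-set `X`,
whose degree-`d` chain group is free on `(1+d)`-tuples); it is `0` in degrees `≤ 1`. -/
def dBRUX : (d : ℕ) →
    FreeAbelianGroup ((Fin (d + 2) → G) × (Fin (d + 2) → M)) →+
      FreeAbelianGroup ((Fin (d + 1) → G) × (Fin (d + 1) → M))
  | 0 => 0
  | d + 1 =>
    FreeAbelianGroup.lift fun x =>
      ∑ i : Fin (d + 2),
        (-1 : ℤ) ^ (i : ℕ) •
          (FreeAbelianGroup.of (dGdel (d + 2) i.succ x.1, dMmer (d + 2) i.succ x.2) -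
            FreeAbelianGroup.of (dGconj (d + 2) i.succ x.1, dMconj φ (d + 2) i.succ x.1 x.2))

/-- The boundary map `∂^{BR}_{d+1}` of `C^{BR}_*(X;ℤ)_X` (the version with `X`-set `X`);
it is `0` in degrees `≤ 1`. -/
def dBRX : (d : ℕ) →
    FreeAbelianGroup (Fin (d + 2) → M × G) →+ FreeAbelianGroup (Fin (d + 1) → M × G)
  | 0 => 0
  | d + 1 =>
    FreeAbelianGroup.lift fun x =>
      ∑ i : Fin (d + 2),
        (-1 : ℤ) ^ (i : ℕ) •
          (FreeAbelianGroup.of (fun j => x (i.succ.succAbove j)) -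
            FreeAbelianGroup.of (fun j : Fin (d + 2) =>
              if (j : ℕ) < (i : ℕ) + 1 then under φ (x j.castSucc) (x i.succ)
              else overOp φ (x j.succ) (x i.succ)))


/-- The subgroup of `G`-coinvariants relations in `C^{gp}_n(M;ℤ)`:
generated by all `(m₁g,…,m_ng) − (m₁,…,m_n)`. -/
def coinvSub (n : ℕ) : AddSubgroup (FreeAbelianGroup (Fin n → M)) :=
  AddSubgroup.closure
    {z | ∃ (m : Fin n → M) (g : G),
        z = FreeAbelianGroup.of (fun i => ract (m i) g) - FreeAbelianGroup.of m}

/-- The coinvariant group chain group `C^{gp}_n(M;ℤ)_G`. -/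
abbrev CgpG (n : ℕ) : Type _ :=
  FreeAbelianGroup (Fin n → M) ⧸ coinvSub (G := G) (M := M) n

/-- The group-homology boundary map `∂^{gp}_{n+1} : C^{gp}_{n+1}(M;ℤ) → C^{gp}_n(M;ℤ)`
(it is `0` in degrees `≤ 1`, which agrees with this formula at `n = 0`). -/
def dgp (n : ℕ) :
    FreeAbelianGroup (Fin (n + 1) → M) →+ FreeAbelianGroup (Fin n → M) :=
  FreeAbelianGroup.lift fun m =>
    (∑ p : Fin (n + 1), (-1 : ℤ) ^ (p : ℕ) • FreeAbelianGroup.of (dMmer n p m)) +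
      (-1 : ℤ) ^ (n + 1) • FreeAbelianGroup.of fun j : Fin n => m j.castSucc

/-- `|k| = k₁ + ⋯ + k_n`. -/
def wt {n : ℕ} (k : Fin n → Bool) : ℕ := ∑ i, if k i then 1 else 0

/-- `g_{k,i} = φ(g₀^{k₀} ⋯ g_i^{k_i}) · g_{i+1}^{k_{i+1}} ⋯ g_{n-1}^{k_{n-1}}`
(indices written `0`-based; the products are ordered). -/
def gki {n : ℕ} (g : Fin n → G) (k : Fin n → Bool) (i : Fin n) : G :=
  φ ((((List.finRange n).filter fun j => decide (j ≤ i)).map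
        fun j => if k j then g j else 1).prod) *
    (((List.finRange n).filter fun j => decide (i < j)).map
        fun j => if k j then g j else 1).prod

/-- The value of `ψ` on a generator:
`Σ_{k, k₀ = 0} (−1)^{|k|} (m₀ g_{k,0}, …, m_n g_{k,n})`, as an element of the free
abelian group (before passing to coinvariants). -/
def psiVal (n : ℕ) (x : (Fin (n + 1) → G) × (Fin (n + 1) → M)) :
    FreeAbelianGroup (Fin (n + 1) → M) :=
  ∑ k ∈ Finset.univ.filter fun k : Fin (n + 1) → Bool => k 0 = false,
    (-1 : ℤ) ^ wt k • FreeAbelianGroup.of fun i => ract (x.2 i) (gki φ x.1 k i)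

/-- `ψ` as a homomorphism into the free abelian group (before coinvariants). -/
def psiFree (n : ℕ) :
    FreeAbelianGroup ((Fin (n + 1) → G) × (Fin (n + 1) → M)) →+
      FreeAbelianGroup (Fin (n + 1) → M) :=
  FreeAbelianGroup.lift (psiVal φ n)

/-- The homomorphism `ψ : C^{BR_U} → C^{gp}(M;ℤ)_G`. -/
def psiG (n : ℕ) :
    FreeAbelianGroup ((Fin (n + 1) → G) × (Fin (n + 1) → M)) →+
      CgpG (G := G) (M := M) (n + 1) :=
  (QuotientAddGroup.mk' (coinvSub (G := G) (M := M) (n + 1))).comp (psiFree φ n)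

/-- The homomorphism `ψ_{•,λ}`, sending a generator `x` to `ψ(x) ⊗ λ(x₁)` where `x₁` is the
first `G`-entry of `x`. -/
noncomputable def psiLam (lam : G → A) (n : ℕ) :
    FreeAbelianGroup ((Fin (n + 1) → G) × (Fin (n + 1) → M)) →+
      TensorProduct ℤ (CgpG (G := G) (M := M) (n + 1)) A :=
  FreeAbelianGroup.lift fun x =>
    (QuotientAddGroup.mk' (coinvSub (G := G) (M := M) (n + 1)) (psiVal φ n x)) ⊗ₜ[ℤ]
      lam (x.1 0)

/-- `D^{gp}_n(M;ℤ)_G`: the image in the coinvariants of the subgroup generated by tuples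
with a vanishing entry in a position `1 ≤ i ≤ n−1`. -/
def DgpGsub (n : ℕ) : AddSubgroup (CgpG (G := G) (M := M) n) :=
  (AddSubgroup.closure
      {z : FreeAbelianGroup (Fin n → M) |
        ∃ (m : Fin n → M) (i : Fin n),
          (i : ℕ) + 1 < n ∧ m i = 0 ∧ z = FreeAbelianGroup.of m}).map
    (QuotientAddGroup.mk' (coinvSub (G := G) (M := M) n))

theorem ract_ract (m : M) (g h : G) : ract (ract m g) h = ract m (g * h) := by
  simp [ract, mul_smul]

theorem ract_one (m : M) : ract m (1 : G) = m := by simp [ract]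

theorem ract_sub (m n : M) (g : G) : ract (m - n) g = ract m g - ract n g := by
  simp [ract, smul_sub]

theorem sum3 {B : Type*} [AddCommGroup B] (F : (Fin 3 → Bool) → B) :
    ∑ k ∈ Finset.univ.filter (fun k : Fin 3 → Bool => k 0 = false), F k =
      F ![false, false, false] + (F ![false, true, false] +
        (F ![false, false, true] + F ![false, true, true])) := by
  have : Finset.univ.filter (fun k : Fin 3 → Bool => k 0 = false) =
      {![false, false, false], ![false, true, false], ![false, false, true],
        ![false, true, true]} := by decide
  rw [this, Finset.sum_insert (by decide), Finset.sum_insert (by decide),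
    Finset.sum_insert (by decide), Finset.sum_singleton]

theorem sum4 {B : Type*} [AddCommGroup B] (F : (Fin 4 → Bool) → B) :
    ∑ k ∈ Finset.univ.filter (fun k : Fin 4 → Bool => k 0 = false), F k =
      F ![false, false, false, false] + (F ![false, true, false, false] +
        (F ![false, false, false, true] + (F ![false, true, false, true] +
      (F ![false, false, true, false] + (F ![false, true, true, false] +
        (F ![false, false, true, true] + F ![false, true, true, true])))))) := by
  have : Finset.univ.filter (fun k : Fin 4 → Bool => k 0 = false) =
      {![false, false, false, false], ![false, true, false, false],
        ![false, false, false, true], ![false, true, false, true],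
        ![false, false, true, false], ![false, true, true, false],
        ![false, false, true, true], ![false, true, true, true]} := by decide
  rw [this, Finset.sum_insert (by decide), Finset.sum_insert (by decide),
    Finset.sum_insert (by decide), Finset.sum_insert (by decide),
    Finset.sum_insert (by decide), Finset.sum_insert (by decide),
    Finset.sum_insert (by decide), Finset.sum_singleton]

theorem gki3 (g : Fin 3 → G) (k : Fin 3 → Bool) (h : k 0 = false) :
    gki φ g k 0 = (if k 1 then g 1 else 1) * (if k 2 then g 2 else 1) ∧
    gki φ g k 1 = φ (if k 1 then g 1 else 1) * (if k 2 then g 2 else 1) ∧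
    gki φ g k 2 = φ (if k 1 then g 1 else 1) * φ (if k 2 then g 2 else 1) := by
  have e : List.finRange 3 = [0, 1, 2] := by decide
  simp only [← map_mul]
  simp [gki, e, List.filter, h]

theorem gki4 (g : Fin 4 → G) (k : Fin 4 → Bool) (h : k 0 = false) :
    gki φ g k 0 = (if k 1 then g 1 else 1) * ((if k 2 then g 2 else 1) *
      (if k 3 then g 3 else 1)) ∧
    gki φ g k 1 = φ (if k 1 then g 1 else 1) * ((if k 2 then g 2 else 1) *
      (if k 3 then g 3 else 1)) ∧
    gki φ g k 2 = φ (if k 1 then g 1 else 1) * (φ (if k 2 then g 2 else 1) *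
      (if k 3 then g 3 else 1)) ∧
    gki φ g k 3 = φ (if k 1 then g 1 else 1) * (φ (if k 2 then g 2 else 1) *
      φ (if k 3 then g 3 else 1)) := by
  have e : List.finRange 4 = [0, 1, 2, 3] := by decide
  have h1 : (3 : Fin 4) ≤ 2 ↔ False := by decide
  have h2 : (2 : Fin 4) < 3 ↔ True := by decide
  simp only [← map_mul, ← mul_assoc]
  simp [gki, e, List.filter, h, h1, h2, mul_assoc]

/-- Values of the `2`- and `3`-cocycles `Φ_{f,λ}` of the `G`-Alexander
multiple conjugation biquandle with `X`-set `X` on the generators all of whose blocks are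
singletons, with `mᵢ' = mᵢ − mᵢ₊₁`:
`((f ⊗ id_A) ∘ ψ_{2,λ} ∘ γ₂)((m₀,g₀),(m₁,g₁),(m₂,g₂)) =
   f(m₀' − m₀'·(φ(g₁)⁻¹g₁), m₁', m₂ − m₂·(φ(g₂)g₂⁻¹)) ⊗ λ(g₀)` and
`((f ⊗ id_A) ∘ ψ_{3,λ} ∘ γ₃)((m₀,g₀),…,(m₃,g₃)) =
   [f(m₀' − m₀'·(φ(g₁)⁻¹g₁), m₁', m₂', m₃ − m₃·(φ(g₃)g₃⁻¹))
     − f((m₀' − m₀'·(φ(g₁)⁻¹g₁))g₂, m₁'g₂, m₂'φ(g₂), (m₃ − m₃·(φ(g₃)g₃⁻¹))φ(g₂))] ⊗ λ(g₀)`. -/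
theorem mcbX_cocycle_formulas (hφ : ∀ g : G, φ g ∈ Subgroup.center G)
    (lam : G → A) (hlam : ∀ g h : G, lam (g * h) = lam g + lam h) :
    (∀ f : M → M → M → A,
      (∀ m m' n p : M, f (m + m') n p = f m n p + f m' n p) →
      (∀ m n n' p : M, f m (n + n') p = f m n p + f m n' p) →
      (∀ m n p p' : M, f m n (p + p') = f m n p + f m n p') →
      (∀ (m n p : M) (g : G), f (ract m g) (ract n g) (ract p g) = f m n p) →
      ∀ (m₀ m₁ m₂ : M) (g₀ g₁ g₂ : G),
        (FreeAbelianGroup.lift fun x : (Fin 3 → G) × (Fin 3 → M) =>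
            (FreeAbelianGroup.lift (fun v : Fin 3 → M => f (v 0) (v 1) (v 2))
              (psiVal φ 2 x)) ⊗ₜ[ℤ] lam (x.1 0))
          (gammaMap 3 (FreeAbelianGroup.of ![(m₀, g₀), (m₁, g₁), (m₂, g₂)])) =
        f ((m₀ - m₁) - ract (m₀ - m₁) ((φ g₁)⁻¹ * g₁)) (m₁ - m₂)
            (m₂ - ract m₂ (φ g₂ * g₂⁻¹)) ⊗ₜ[ℤ] lam g₀) ∧
    (∀ f : M → M → M → M → A,
      (∀ m m' n p q : M, f (m + m') n p q = f m n p q + f m' n p q) →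
      (∀ m n n' p q : M, f m (n + n') p q = f m n p q + f m n' p q) →
      (∀ m n p p' q : M, f m n (p + p') q = f m n p q + f m n p' q) →
      (∀ m n p q q' : M, f m n p (q + q') = f m n p q + f m n p q') →
      (∀ (m n p q : M) (g : G),
        f (ract m g) (ract n g) (ract p g) (ract q g) = f m n p q) →
      ∀ (m₀ m₁ m₂ m₃ : M) (g₀ g₁ g₂ g₃ : G),
        (FreeAbelianGroup.lift fun x : (Fin 4 → G) × (Fin 4 → M) =>
            (FreeAbelianGroup.lift (fun v : Fin 4 → M => f (v 0) (v 1) (v 2) (v 3))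
              (psiVal φ 3 x)) ⊗ₜ[ℤ] lam (x.1 0))
          (gammaMap 4
            (FreeAbelianGroup.of ![(m₀, g₀), (m₁, g₁), (m₂, g₂), (m₃, g₃)])) =
        (f ((m₀ - m₁) - ract (m₀ - m₁) ((φ g₁)⁻¹ * g₁)) (m₁ - m₂) (m₂ - m₃)
              (m₃ - ract m₃ (φ g₃ * g₃⁻¹)) -
            f (ract ((m₀ - m₁) - ract (m₀ - m₁) ((φ g₁)⁻¹ * g₁)) g₂)
              (ract (m₁ - m₂) g₂) (ract (m₂ - m₃) (φ g₂))
              (ract (m₃ - ract m₃ (φ g₃ * g₃⁻¹)) (φ g₂))) ⊗ₜ[ℤ] lam g₀) := by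
  have hc : ∀ a b : G, φ a * b = b * φ a := fun a b =>
    ((Subgroup.mem_center_iff.1 (hφ a)) b).symm
  have hci : ∀ a b : G, (φ a)⁻¹ * b = b * (φ a)⁻¹ := fun a b =>
    ((Subgroup.mem_center_iff.1 (inv_mem (hφ a))) b).symm
  constructor
  · intro f h1 h2 h3 hG m₀ m₁ m₂ g₀ g₁ g₂
    have s1 : ∀ m m' n p : M, f (m - m') n p = f m n p - f m' n p := by
      intro m m' n p
      rw [eq_sub_iff_add_eq, ← h1, sub_add_cancel]
    have s3 : ∀ m n p p' : M, f m n (p - p') = f m n p - f m n p' := by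
      intro m n p p'
      rw [eq_sub_iff_add_eq, ← h3, sub_add_cancel]
    simp only [gammaMap, FreeAbelianGroup.lift_apply_of]
    congr 1
    simp only [psiVal, map_sum, map_zsmul, FreeAbelianGroup.lift_apply_of]
    rw [sum3]
    simp only [gki3 φ _ _ (show (![false, false, false] : Fin 3 → Bool) 0 = false from rfl),
      gki3 φ _ _ (show (![false, true, false] : Fin 3 → Bool) 0 = false from rfl),
      gki3 φ _ _ (show (![false, false, true] : Fin 3 → Bool) 0 = false from rfl),
      gki3 φ _ _ (show (![false, true, true] : Fin 3 → Bool) 0 = false from rfl)]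
    simp only [(show wt (![false, false, false] : Fin 3 → Bool) = 0 by decide),
      (show wt (![false, false, true] : Fin 3 → Bool) = 1 by decide),
      (show wt (![false, true, false] : Fin 3 → Bool) = 1 by decide),
      (show wt (![false, true, true] : Fin 3 → Bool) = 2 by decide)]
    simp [ract_one]
    generalize m₀ - m₁ = a
    generalize m₁ - m₂ = b
    have e1 := hG (ract a g₁) (ract b (φ g₁)) (ract m₂ (φ g₁)) (φ g₁)⁻¹
    have e2 := hG (ract a g₂) (ract b g₂) (ract m₂ (φ g₂)) g₂⁻¹
    have e3 := hG (ract a (g₁ * g₂)) (ract b (φ g₁ * g₂)) (ract m₂ (φ g₁ * φ g₂))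
      (g₂⁻¹ * (φ g₁)⁻¹)
    have q : φ g₁ * φ g₂ * (g₂⁻¹ * (φ g₁)⁻¹) = φ g₂ * g₂⁻¹ := by
      rw [← mul_assoc, mul_assoc (φ g₁), hc g₁, mul_inv_cancel_right]
    simp only [ract_ract, mul_inv_cancel, ract_one] at e1 e2 e3
    rw [← e1, ← e2, ← e3, s1, s3, s3, q, hci]
    simp [mul_assoc, ract_one]
    abel
  · intro f h1 h2 h3 h4 hG m₀ m₁ m₂ m₃ g₀ g₁ g₂ g₃
    have s1 : ∀ m m' n p q : M, f (m - m') n p q = f m n p q - f m' n p q := by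
      intro m m' n p q
      rw [eq_sub_iff_add_eq, ← h1, sub_add_cancel]
    have s4 : ∀ m n p q q' : M, f m n p (q - q') = f m n p q - f m n p q' := by
      intro m n p q q'
      rw [eq_sub_iff_add_eq, ← h4, sub_add_cancel]
    simp only [gammaMap, FreeAbelianGroup.lift_apply_of]
    congr 1
    simp only [psiVal, map_sum, map_zsmul, FreeAbelianGroup.lift_apply_of]
    rw [sum4]
    simp only [gki4 φ _ _ (show (![false, false, false, false] : Fin 4 → Bool) 0 = false from rfl),
      gki4 φ _ _ (show (![false, false, false, true] : Fin 4 → Bool) 0 = false from rfl),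
      gki4 φ _ _ (show (![false, false, true, false] : Fin 4 → Bool) 0 = false from rfl),
      gki4 φ _ _ (show (![false, false, true, true] : Fin 4 → Bool) 0 = false from rfl),
      gki4 φ _ _ (show (![false, true, false, false] : Fin 4 → Bool) 0 = false from rfl),
      gki4 φ _ _ (show (![false, true, false, true] : Fin 4 → Bool) 0 = false from rfl),
      gki4 φ _ _ (show (![false, true, true, false] : Fin 4 → Bool) 0 = false from rfl),
      gki4 φ _ _ (show (![false, true, true, true] : Fin 4 → Bool) 0 = false from rfl)]
    simp only [(show wt (![false, false, false, false] : Fin 4 → Bool) = 0 by decide),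
      (show wt (![false, false, false, true] : Fin 4 → Bool) = 1 by decide),
      (show wt (![false, false, true, false] : Fin 4 → Bool) = 1 by decide),
      (show wt (![false, false, true, true] : Fin 4 → Bool) = 2 by decide),
      (show wt (![false, true, false, false] : Fin 4 → Bool) = 1 by decide),
      (show wt (![false, true, false, true] : Fin 4 → Bool) = 2 by decide),
      (show wt (![false, true, true, false] : Fin 4 → Bool) = 2 by decide),
      (show wt (![false, true, true, true] : Fin 4 → Bool) = 3 by decide)]
    simp [ract_one]
    generalize m₀ - m₁ = a
    generalize m₁ - m₂ = b
    generalize m₂ - m₃ = c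
    have q1 : ∀ x : G, φ g₁ * x * (φ g₁)⁻¹ = x := fun x => by
      rw [hc g₁, mul_inv_cancel_right]
    have q1' : ∀ x : G, φ g₁ * (x * (φ g₁)⁻¹) = x := fun x => by
      rw [← mul_assoc, q1]
    have q2 : ∀ x y : G, φ g₁ * (x * (y * (φ g₁)⁻¹)) = x * y := fun x y => by
      rw [← mul_assoc x, q1']
    have q3 : ∀ x y z : G, φ g₁ * (x * (y * (z * (φ g₁)⁻¹))) = x * (y * z) := fun x y z => by
      rw [← mul_assoc y, q2]
    have r1 : (φ g₁)⁻¹ * g₁ = g₁ * (φ g₁)⁻¹ := hci _ _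
    have r2 : g₁ * ((φ g₁)⁻¹ * g₂) = g₁ * (g₂ * (φ g₁)⁻¹) := by rw [hci]
    have r3 : φ g₃ * (g₃⁻¹ * φ g₂) = φ g₂ * (φ g₃ * g₃⁻¹) := by
      rw [hc g₂, mul_assoc]
    have e1 := hG (ract a g₁) (ract b (φ g₁)) (ract c (φ g₁)) (ract m₃ (φ g₁)) (φ g₁)⁻¹
    have e2 := hG (ract a g₃) (ract b g₃) (ract c g₃) (ract m₃ (φ g₃)) g₃⁻¹
    have e3 := hG (ract a (g₁ * g₃)) (ract b (φ g₁ * g₃)) (ract c (φ g₁ * g₃))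
      (ract m₃ (φ g₁ * φ g₃)) (g₃⁻¹ * (φ g₁)⁻¹)
    have e4 := hG (ract a (g₁ * g₂)) (ract b (φ g₁ * g₂)) (ract c (φ g₁ * φ g₂))
      (ract m₃ (φ g₁ * φ g₂)) (φ g₁)⁻¹
    have e5 := hG (ract a (g₂ * g₃)) (ract b (g₂ * g₃)) (ract c (φ g₂ * g₃))
      (ract m₃ (φ g₂ * φ g₃)) g₃⁻¹
    have e6 := hG (ract a (g₁ * (g₂ * g₃))) (ract b (φ g₁ * (g₂ * g₃)))
      (ract c (φ g₁ * (φ g₂ * g₃)))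
      (ract m₃ (φ g₁ * (φ g₂ * φ g₃))) (g₃⁻¹ * (φ g₁)⁻¹)
    simp only [ract_ract, mul_assoc, mul_inv_cancel_left, mul_inv_cancel, mul_one, q1', q2, q3,
      ract_one] at e1 e2 e3 e4 e5 e6
    rw [← e1, ← e2, ← e3, ← e4, ← e5, ← e6]
    simp only [ract_sub, s1, s4, ract_ract, mul_assoc, r1, r2, r3]
    abel

end GAlex
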